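/- Let d ≥ 1 and m > 2d a real number. Let χ₁ : ℝ^{2d} → ℝ^{2d} be a Lipschitz bijection with Lipschitz constant L > 0 which preserves Lebesgue measure, and let χ₂ : ℝ^{2d} → ℝ^{2d} be any map. Let T₂ : 𝒮(ℝ^d) → 𝒮(ℝ^d) be a continuous linear operator and T₁ : 𝒮(ℝ^d) → 𝒮′(ℝ^d) a continuous linear operator, and suppose |⟨T₁(π(z)g), π(w)g⟩| ≤ A₁·(1+|w−χ₁(z)|²)^{−m/2} and |⟨T₂(π(z)g), π(w)g⟩| ≤ A₂·(1+|w−χ₂(z)|²)^{−m/2} for all z, w ∈ ℝ^{2d}, with A₁, A₂ ≥ 0. Then there exists a constant C > 0, depending only on m, d and L, such that |⟨T₁(T₂(π(z)g)), π(w)g⟩| ≤ C·A₁·A₂·(1+|w−χ₁(χ₂(z))|²)^{−m/2} for all z, w ∈ ℝ^{2d}. -/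

import Mathlib

open MeasureTheory Complex Real
open scoped ENNReal RealInnerProductSpace

noncomputable section

abbrev E (d : ℕ) : Type := EuclideanSpace ℝ (Fin d)

/-- Phase space `ℝ^{2d} = ℝ^d × ℝ^d`. -/
abbrev P (d : ℕ) : Type := E d × E d

/-- The Schwartz space `𝒮(ℝ^d)` of complex valued functions. -/
abbrev SCH (d : ℕ) : Type := SchwartzMap (E d) ℂ

/-- Square of the Euclidean norm on the phase space `ℝ^{2d}`. -/
def ensq {d : ℕ} (z : P d) : ℝ := ‖z.1‖ ^ 2 + ‖z.2‖ ^ 2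

open Filter Topology BoundedContinuousFunction FourierTransform
open scoped ContDiff NNReal SchwartzMap

/-!
Testing `T₁` and `T₂` on wave packets turns operators into matrices over phase space. The inversion
formula `(2π)^d ‖g‖² f = ∫ ⟨f, π(v)g⟩ π(v)g dv` of the short-time Fourier transform, applied to
`f = T₂ π(z)g`, makes the matrix of `T₁ T₂` the product of the two matrices:
`(2π)^d ‖g‖² ⟨T₁ T₂ π(z)g, π(w)g⟩ = ∫ ⟨T₂ π(z)g, π(v)g⟩ ⟨T₁ π(v)g, π(w)g⟩ dv`.

To pull a functional on Schwartz space through the inversion integral, note that its continuity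
involves finitely many seminorms, so by Hahn–Banach it factors through finitely many weighted
derivatives with values in spaces of bounded continuous functions, where the Bochner integral is
available.

As `χ₁` is Lipschitz, `⟨v - χ₂ z⟩^{-m}` is at most `(1 + L)^m ⟨χ₁ v - χ₁ (χ₂ z)⟩^{-m}`, and as `χ₁`
preserves the measure, `χ₁ v` may be taken as the variable of integration. It remains to see that
`⟨·⟩^{-m}` is, up to a constant, stable under convolution for `m > 2d`: if `a + b = c` then `⟨a⟩` or
`⟨b⟩` is at least `⟨c⟩ / 2`.
-/

section IntegralDerivative

variable {V F W : Type*} [NormedAddCommGroup V] [NormedSpace ℝ V]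
  [NormedAddCommGroup F] [NormedSpace ℝ F] [MeasurableSpace W] {μ : Measure W}
  {f : W → V → F}

theorem integrable_fderiv_apply {y : V}
    (hmeas : AEStronglyMeasurable (fun w => fderiv ℝ (f w) y) μ) {b : W → ℝ}
    (hb : Integrable b μ) (hbound : ∀ w, ‖fderiv ℝ (f w) y‖ ≤ b w) (v : V) :
    Integrable (fun w => fderiv ℝ (f w) y v) μ :=
  (hb.mono' hmeas (.of_forall hbound)).apply_continuousLinearMap v

theorem fderiv_integral_apply {y : V} (hf : ∀ w, Differentiable ℝ (f w))
    (hmeas : ∀ y, AEStronglyMeasurable (fun w => f w y) μ) (hint : Integrable (fun w => f w y) μ)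
    (hmeas' : AEStronglyMeasurable (fun w => fderiv ℝ (f w) y) μ) {b : W → ℝ}
    (hb : Integrable b μ) (hbound : ∀ w y, ‖fderiv ℝ (f w) y‖ ≤ b w) (v : V) :
    fderiv ℝ (fun y => ∫ w, f w y ∂μ) y v = ∫ w, fderiv ℝ (f w) y v ∂μ := by
  rw [(hasFDerivAt_integral_of_dominated_of_fderiv_le univ_mem (.of_forall hmeas) hint hmeas'
    (.of_forall fun w y _ => hbound w y) hb
    (.of_forall fun w y _ => (hf w y).hasFDerivAt)).fderiv,
    ContinuousLinearMap.integral_apply (hb.mono' hmeas' (.of_forall fun w => hbound w y))]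

theorem iteratedFDeriv_integral (hf : ∀ w, ContDiff ℝ ∞ (f w))
    (hmeas : ∀ l y, AEStronglyMeasurable (fun w => iteratedFDeriv ℝ l (f w) y) μ)
    {b : ℕ → W → ℝ} (hb : ∀ l, Integrable (b l) μ)
    (hbound : ∀ l w y, ‖iteratedFDeriv ℝ l (f w) y‖ ≤ b l w) (l : ℕ) (y : V) :
    iteratedFDeriv ℝ l (fun y => ∫ w, f w y ∂μ) y = ∫ w, iteratedFDeriv ℝ l (f w) y ∂μ := by
  have hint (l : ℕ) (y : V) : Integrable (fun w => iteratedFDeriv ℝ l (f w) y) μ :=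
    (hb l).mono' (hmeas l y) (.of_forall fun w => hbound l w y)
  induction l generalizing y with
  | zero =>
    ext v
    rw [ContinuousMultilinearMap.integral_apply (hint 0 y)]
    simp only [iteratedFDeriv_zero_apply]
  | succ l ih =>
    have hmeas' : AEStronglyMeasurable (fun w => fderiv ℝ (iteratedFDeriv ℝ l (f w)) y) μ := by
      simp only [fderiv_iteratedFDeriv, Function.comp_apply]
      exact (LinearIsometryEquiv.continuous _).comp_aestronglyMeasurable (hmeas (l + 1) y)
    have hbound' (w : W) (y : V) : ‖fderiv ℝ (iteratedFDeriv ℝ l (f w)) y‖ ≤ b (l + 1) w :=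
      norm_fderiv_iteratedFDeriv.trans_le (hbound (l + 1) w y)
    have hdiff (w : W) : Differentiable ℝ (iteratedFDeriv ℝ l (f w)) :=
      (hf w).differentiable_iteratedFDeriv (by exact_mod_cast WithTop.coe_lt_top _)
    ext v
    rw [ContinuousMultilinearMap.integral_apply (hint (l + 1) y)]
    simp only [iteratedFDeriv_succ_apply_left]
    rw [funext ih, fderiv_integral_apply hdiff (hmeas l) (hint l y) hmeas' (hb (l + 1)) hbound',
      ContinuousMultilinearMap.integral_apply
        (integrable_fderiv_apply hmeas' (hb (l + 1)) (fun w => hbound' w y) (v 0))]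

end IntegralDerivative

section StrongDual

variable {𝕜 M B : Type*} [RCLike 𝕜] [AddCommGroup M] [Module 𝕜 M]
  [NormedAddCommGroup B] [NormedSpace 𝕜 B]

theorem exists_strongDual_comp_eq_of_norm_le (ι : M →ₗ[𝕜] B) (lam : M →ₗ[𝕜] 𝕜) (C : ℝ)
    (hle : ∀ f, ‖lam f‖ ≤ C * ‖ι f‖) : ∃ Λ : StrongDual 𝕜 B, ∀ f, Λ (ι f) = lam f := by
  have hker : ι.ker ≤ lam.ker := fun f hf => by
    simpa [LinearMap.mem_ker.1 hf] using hle f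
  let φ : ι.range →ₗ[𝕜] 𝕜 := ι.ker.liftQ lam hker ∘ₗ ι.quotKerEquivRange.symm.toLinearMap
  have hφ (f : M) : φ (ι.rangeRestrict f) = lam f := by
    have : ι.quotKerEquivRange.symm (ι.rangeRestrict f) = ι.ker.mkQ f :=
      (LinearEquiv.symm_apply_eq _).2 rfl
    simp [φ, this]
  obtain ⟨Λ, hΛ, -⟩ := exists_extension_norm_eq ι.range <| φ.mkContinuous C fun x => by
    obtain ⟨f, rfl⟩ := ι.surjective_rangeRestrict x
    exact (congrArg norm (hφ f)).trans_le (hle f)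
  exact ⟨Λ, fun f => (hΛ (ι.rangeRestrict f)).trans (hφ f)⟩

end StrongDual

section SchwartzIntegral

theorem norm_multilinear_le_of_unit_le {V F : Type*} [NormedAddCommGroup V] [NormedSpace ℝ V]
    [NormedAddCommGroup F] [NormedSpace ℝ F] {l : ℕ} (M : V [×l]→L[ℝ] F) {C : ℝ} (hC : 0 ≤ C)
    (hM : ∀ v : Fin l → Metric.closedBall (0 : V) 1, ‖M fun i => v i‖ ≤ C) : ‖M‖ ≤ C := by
  refine M.opNorm_le_bound hC fun v => ?_
  have hv (i : Fin l) : ‖‖v i‖⁻¹ • v i‖ ≤ 1 := by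
    rw [norm_smul, norm_inv, norm_norm]
    exact inv_mul_le_one
  have hscale : v = fun i => ‖v i‖ • ‖v i‖⁻¹ • v i := funext fun i => by
    rcases eq_or_ne (v i) 0 with h | h
    · simp [h]
    · rw [smul_inv_smul₀ (norm_ne_zero_iff.2 h)]
  calc ‖M v‖ = (∏ i, ‖v i‖) * ‖M fun i => ‖v i‖⁻¹ • v i‖ := by
        conv_lhs => rw [hscale]
        rw [M.map_smul_univ, norm_smul, norm_prod]
        simp only [norm_norm]
    _ ≤ (∏ i, ‖v i‖) * C := by
        gcongr
        exact hM fun i => ⟨‖v i‖⁻¹ • v i, mem_closedBall_zero_iff.2 (hv i)⟩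
    _ = C * ∏ i, ‖v i‖ := mul_comm _ _

variable {𝕜 V F W : Type*} [RCLike 𝕜] [NormedAddCommGroup V] [NormedSpace ℝ V]
  [NormedAddCommGroup F] [NormedSpace ℝ F] [NormedSpace 𝕜 F] [SMulCommClass ℝ 𝕜 F]

theorem norm_pow_smul_iteratedFDeriv_unit_le (k l : ℕ) (f : 𝓢(V, F)) (y : V)
    (v : Fin l → Metric.closedBall (0 : V) 1) :
    ‖‖y‖ ^ k • iteratedFDeriv ℝ l f y (fun i => v i)‖ ≤ SchwartzMap.seminorm 𝕜 k l f := by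
  rw [norm_smul, norm_pow, norm_norm]
  refine le_trans ?_ (SchwartzMap.le_seminorm 𝕜 k l f y)
  gcongr
  exact ContinuousMultilinearMap.unit_le_opNorm _ <|
    (pi_norm_le_iff_of_nonneg zero_le_one).2 fun i => mem_closedBall_zero_iff.1 (v i).2

variable (𝕜) in
/-- The weighted derivative `(y, v) ↦ ‖y‖ ^ k • D^l f y v` of a Schwartz function, as a bounded
continuous function. Restricting the directions `v i` to the unit ball makes its uniform norm the
Schwartz seminorm of index `(k, l)`, while the values stay in `F`. -/
def weightedDerivCLM (k l : ℕ) :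
    𝓢(V, F) →L[𝕜] (V × (Fin l → Metric.closedBall (0 : V) 1)) →ᵇ F :=
  SchwartzMap.mkCLMtoNormedSpace
    (fun f : 𝓢(V, F) => ofNormedAddCommGroup
      (fun p => ‖p.1‖ ^ k • iteratedFDeriv ℝ l f p.1 fun i => p.2 i)
      ((continuous_fst.norm.pow k).smul <|
        (((f.smooth l).continuous_iteratedFDeriv le_rfl).comp continuous_fst).eval (by fun_prop))
      (SchwartzMap.seminorm 𝕜 k l f)
      fun p => norm_pow_smul_iteratedFDeriv_unit_le k l f p.1 p.2)
    (fun f g => by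
      ext1 p
      simp [iteratedFDeriv_add_apply (f.smooth l).contDiffAt (g.smooth l).contDiffAt])
    (fun c f => by
      ext1 p
      exact (congrArg (fun M : V [×l]→L[ℝ] F => ‖p.1‖ ^ k • M fun i => p.2 i)
        (iteratedFDeriv_const_smul_apply (f.smooth l).contDiffAt)).trans (smul_comm _ _ _))
    ⟨{(k, l)}, 1, zero_le_one, fun f => by
      simpa using norm_ofNormedAddCommGroup_le _ (apply_nonneg _ _) _⟩

theorem norm_weightedDerivCLM (k l : ℕ) (f : 𝓢(V, F)) :
    ‖weightedDerivCLM 𝕜 k l f‖ = SchwartzMap.seminorm 𝕜 k l f := by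
  apply le_antisymm
  · exact (BoundedContinuousFunction.norm_le (apply_nonneg _ _)).2 fun p =>
      norm_pow_smul_iteratedFDeriv_unit_le k l f p.1 p.2
  · refine SchwartzMap.seminorm_le_bound 𝕜 k l f (norm_nonneg _) fun y => ?_
    rw [← abs_of_nonneg (pow_nonneg (norm_nonneg y) k), ← Real.norm_eq_abs, ← norm_smul]
    exact norm_multilinear_le_of_unit_le _ (norm_nonneg _) fun v =>
      (weightedDerivCLM 𝕜 k l f).norm_coe_le_norm (y, v)

theorem continuous_of_continuous_iteratedFDeriv [ProperSpace V] [TopologicalSpace W]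
    {K : W → 𝓢(V, F)} (hcont : ∀ l, Continuous fun p : W × V => iteratedFDeriv ℝ l (K p.1) p.2)
    (hbdd : ∀ k l w, IsBoundedUnder (· ≤ ·) (𝓝 w) fun w => SchwartzMap.seminorm ℝ k l (K w)) :
    Continuous K := by
  -- Compactness controls the bounded `y`; for large `y` the bounded seminorm of weight `k + 1`
  -- gains a factor `1 / ‖y‖`.
  refine continuous_iff_continuousAt.2 fun w₀ =>
    ((schwartz_withSeminorms ℝ V F).tendsto_nhds K (K w₀)).2 fun ⟨k, l⟩ ε hε => ?_
  obtain ⟨C, hC⟩ := hbdd (k + 1) l w₀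
  have hfar : ∀ᶠ w in 𝓝 w₀, SchwartzMap.seminorm ℝ (k + 1) l (K w - K w₀) ≤ 2 * |C| := by
    filter_upwards [eventually_map.1 hC] with w hw
    linarith [map_sub_le_add (SchwartzMap.seminorm ℝ (k + 1) l) (K w) (K w₀),
      (eventually_map.1 hC).self_of_nhds, le_abs_self C]
  let R := 4 * |C| / ε
  have hnear : ∀ᶠ w in 𝓝 w₀, ∀ y ∈ Metric.closedBall (0 : V) R,
      ‖y‖ ^ k * ‖iteratedFDeriv ℝ l (K w) y - iteratedFDeriv ℝ l (K w₀) y‖ < ε / 2 := by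
    refine (isCompact_closedBall (0 : V) R).eventually_forall_of_forall_eventually fun y _ => ?_
    have hdiff : Continuous fun p : W × V =>
        ‖p.2‖ ^ k * ‖iteratedFDeriv ℝ l (K p.1) p.2 - iteratedFDeriv ℝ l (K w₀) p.2‖ := by
      refine (continuous_snd.norm.pow k).mul ((hcont l).sub ?_).norm
      exact (hcont l).comp (continuous_const.prodMk continuous_snd)
    exact hdiff.continuousAt.eventually_lt (g := fun _ => ε / 2) continuousAt_const (by simpa)
  filter_upwards [hfar, hnear] with w hwfar hwnear
  refine (SchwartzMap.seminorm_le_bound ℝ k l _ (half_pos hε).le fun y => ?_).trans_lt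
    (half_lt_self hε)
  rcases le_or_gt ‖y‖ R with hy | hy
  · rw [show ⇑(K w - K w₀) = ⇑(K w) - ⇑(K w₀) from rfl,
      iteratedFDeriv_sub_apply ((K w).smooth l).contDiffAt ((K w₀).smooth l).contDiffAt]
    exact (hwnear y (mem_closedBall_zero_iff.2 hy)).le
  · have hy0 : 0 < ‖y‖ := lt_of_le_of_lt (by positivity) hy
    refine le_of_mul_le_mul_left ?_ hy0
    calc ‖y‖ * (‖y‖ ^ k * ‖iteratedFDeriv ℝ l (K w - K w₀) y‖)
        = ‖y‖ ^ (k + 1) * ‖iteratedFDeriv ℝ l (K w - K w₀) y‖ := by ring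
      _ ≤ 2 * |C| := (SchwartzMap.le_seminorm ℝ (k + 1) l _ y).trans hwfar
      _ = R * (ε / 2) := by simp only [R]; field_simp; ring
      _ ≤ ‖y‖ * (ε / 2) := by gcongr

theorem continuous_iteratedFDeriv_eval (l : ℕ) (y : V) :
    Continuous fun f : 𝓢(V, F) => iteratedFDeriv ℝ l f y :=
  (SchwartzMap.mkCLMtoNormedSpace (𝕜 := ℝ) (σ := RingHom.id ℝ)
    (fun f : 𝓢(V, F) => iteratedFDeriv ℝ l f y)
    (fun f g => iteratedFDeriv_add_apply (f.smooth l).contDiffAt (g.smooth l).contDiffAt)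
    (fun _ f => iteratedFDeriv_const_smul_apply (f.smooth l).contDiffAt)
    ⟨{(0, l)}, 1, zero_le_one, fun f => by
      simpa using SchwartzMap.norm_iteratedFDeriv_le_seminorm ℝ f l y⟩).continuous

variable [TopologicalSpace W] [SecondCountableTopology W] [MeasurableSpace W]
  [OpensMeasurableSpace W] {μ : Measure W} {K : W → 𝓢(V, F)}

theorem integrable_weightedDerivCLM (hK : Continuous K) {k l : ℕ}
    (hint : Integrable (fun w => SchwartzMap.seminorm 𝕜 k l (K w)) μ) :
    Integrable (fun w => weightedDerivCLM 𝕜 k l (K w)) μ :=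
  hint.mono' ((weightedDerivCLM 𝕜 k l).continuous.comp hK).aestronglyMeasurable
    (.of_forall fun w => (norm_weightedDerivCLM k l (K w)).le)

variable [CompleteSpace F]

theorem weightedDerivCLM_eq_integral (hK : Continuous K)
    (hint : ∀ k l, Integrable (fun w => SchwartzMap.seminorm 𝕜 k l (K w)) μ)
    {f : 𝓢(V, F)} (hf : ∀ y, f y = ∫ w, K w y ∂μ) (k l : ℕ) :
    weightedDerivCLM 𝕜 k l f = ∫ w, weightedDerivCLM 𝕜 k l (K w) ∂μ := by
  have hmeas (l : ℕ) (y : V) : AEStronglyMeasurable (fun w => iteratedFDeriv ℝ l (K w) y) μ :=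
    ((continuous_iteratedFDeriv_eval l y).comp hK).aestronglyMeasurable
  have hbound (l : ℕ) (w : W) (y : V) :
      ‖iteratedFDeriv ℝ l (K w) y‖ ≤ SchwartzMap.seminorm 𝕜 0 l (K w) :=
    SchwartzMap.norm_iteratedFDeriv_le_seminorm 𝕜 (K w) l y
  ext1 p
  calc ‖p.1‖ ^ k • iteratedFDeriv ℝ l f p.1 (fun i => p.2 i)
      = ∫ w, ‖p.1‖ ^ k • iteratedFDeriv ℝ l (K w) p.1 (fun i => p.2 i) ∂μ := by
        rw [funext hf, iteratedFDeriv_integral (fun w => (K w).smooth ⊤) hmeas (hint 0) hbound,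
          ContinuousMultilinearMap.integral_apply
            ((hint 0 l).mono' (hmeas l p.1) (.of_forall fun w => hbound l w p.1)), integral_smul]
    _ = (∫ w, weightedDerivCLM 𝕜 k l (K w) ∂μ) p :=
        (BoundedContinuousFunction.evalCLM ℝ p).integral_comp_comm
          (integrable_weightedDerivCLM hK (hint k l))

theorem clm_apply_eq_integral (hK : Continuous K)
    (hint : ∀ k l, Integrable (fun w => SchwartzMap.seminorm 𝕜 k l (K w)) μ)
    {f : 𝓢(V, F)} (hf : ∀ y, f y = ∫ w, K w y ∂μ) (lam : 𝓢(V, F) →L[𝕜] 𝕜) :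
    lam f = ∫ w, lam (K w) ∂μ := by
  obtain ⟨s, C, -, hC⟩ := Seminorm.bound_of_continuous (schwartz_withSeminorms 𝕜 V F)
    ((normSeminorm 𝕜 𝕜).comp lam.toLinearMap) lam.continuous.norm
  let D : 𝓢(V, F) →ₗ[𝕜] ∀ i : s, (V × (Fin i.1.2 → Metric.closedBall (0 : V) 1)) →ᵇ F :=
    LinearMap.pi fun i => (weightedDerivCLM 𝕜 i.1.1 i.1.2).toLinearMap
  have hle (f : 𝓢(V, F)) : ‖lam f‖ ≤ C * ‖D f‖ := by
    refine (hC f).trans (mul_le_mul_of_nonneg_left ?_ C.2)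
    refine Seminorm.finset_sup_apply_le (norm_nonneg _) fun i hi => ?_
    exact (norm_weightedDerivCLM i.1 i.2 f).ge.trans (norm_le_pi_norm (D f) ⟨i, hi⟩)
  obtain ⟨Λ, hΛ⟩ := exists_strongDual_comp_eq_of_norm_le D lam.toLinearMap C hle
  have hD (i : s) : Integrable (fun w => D (K w) i) μ :=
    integrable_weightedDerivCLM hK (hint i.1.1 i.1.2)
  have hDf : D f = ∫ w, D (K w) ∂μ := funext fun i =>
    (weightedDerivCLM_eq_integral hK hint hf i.1.1 i.1.2).trans (eval_integral hD i).symm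
  calc lam f = Λ (D f) := (hΛ f).symm
    _ = ∫ w, Λ (D (K w)) ∂μ := by
        rw [hDf, Λ.integral_comp_comm (Integrable.of_eval hD)]
    _ = ∫ w, lam (K w) ∂μ := integral_congr_ae (.of_forall fun w => hΛ (K w))

end SchwartzIntegral

section JapaneseBracket

variable {X Y : Type*} [NormedAddCommGroup X]

/-- The Japanese bracket `⟨x⟩ = (1 + ‖x‖²)^{1/2}`, in which the decay of wave-packet matrices is
measured. -/
def japaneseBracket (x : X) : ℝ := √(1 + ‖x‖ ^ 2)

theorem japaneseBracket_pos (x : X) : 0 < japaneseBracket x :=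
  Real.sqrt_pos.2 (by positivity)

theorem one_add_norm_sq_rpow (x : X) (s : ℝ) : (1 + ‖x‖ ^ 2) ^ (s / 2) = japaneseBracket x ^ s := by
  rw [japaneseBracket, Real.sqrt_eq_rpow, ← Real.rpow_mul (by positivity), one_div_mul_eq_div]

theorem japaneseBracket_le_of_norm_le_mul [NormedAddCommGroup Y] {L : ℝ} (hL : 0 ≤ L) {x : X}
    {y : Y} (h : ‖y‖ ≤ L * ‖x‖) : japaneseBracket y ≤ (1 + L) * japaneseBracket x := by
  refine Real.sqrt_le_iff.2 ⟨mul_nonneg (by positivity) (japaneseBracket_pos x).le, ?_⟩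
  rw [mul_pow, japaneseBracket, Real.sq_sqrt (by positivity)]
  nlinarith [pow_le_pow_left₀ (norm_nonneg y) h 2, mul_nonneg hL (sq_nonneg ‖x‖)]

theorem japaneseBracket_add_le (x y : X) :
    japaneseBracket (x + y) ≤ japaneseBracket x + japaneseBracket y := by
  have hx := japaneseBracket_pos x
  have hy := japaneseBracket_pos y
  have hsq (z : X) : japaneseBracket z ^ 2 = 1 + ‖z‖ ^ 2 := Real.sq_sqrt (by positivity)
  have hmul : ‖x‖ * ‖y‖ ≤ japaneseBracket x * japaneseBracket y := by
    gcongr <;> exact Real.le_sqrt_of_sq_le (by linarith)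
  refine Real.sqrt_le_iff.2 ⟨by positivity, ?_⟩
  nlinarith [pow_le_pow_left₀ (norm_nonneg _) (norm_add_le x y) 2, hsq x, hsq y]

theorem rpow_neg_le_mul_rpow_neg {a b c s : ℝ} (ha : 0 < a) (hb : 0 < b) (hc : 0 < c)
    (hs : 0 ≤ s) (h : b ≤ c * a) : a ^ (-s) ≤ c ^ s * b ^ (-s) := by
  have hmono := Real.rpow_le_rpow_of_nonpos hb h (neg_nonpos.2 hs)
  rwa [Real.mul_rpow hc.le ha.le, Real.rpow_neg hc.le, inv_mul_le_iff₀ (by positivity)] at hmono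

theorem japaneseBracket_rpow_neg_mul_le {s : ℝ} (hs : 0 ≤ s) (x y : X) :
    japaneseBracket x ^ (-s) * japaneseBracket y ^ (-s) ≤
      2 ^ s * japaneseBracket (x + y) ^ (-s) *
        (japaneseBracket x ^ (-s) + japaneseBracket y ^ (-s)) := by
  have hx := japaneseBracket_pos x
  have hy := japaneseBracket_pos y
  have hxy := japaneseBracket_pos (x + y)
  have hadd := japaneseBracket_add_le x y
  rw [mul_add]
  rcases le_total (japaneseBracket x) (japaneseBracket y) with hle | hle
  · have := rpow_neg_le_mul_rpow_neg hy hxy two_pos hs (by linarith)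
    calc japaneseBracket x ^ (-s) * japaneseBracket y ^ (-s)
        ≤ japaneseBracket x ^ (-s) * (2 ^ s * japaneseBracket (x + y) ^ (-s)) := by gcongr
      _ = 2 ^ s * japaneseBracket (x + y) ^ (-s) * japaneseBracket x ^ (-s) := mul_comm _ _
      _ ≤ _ := le_add_of_nonneg_right (by positivity)
  · have := rpow_neg_le_mul_rpow_neg hx hxy two_pos hs (by linarith)
    calc japaneseBracket x ^ (-s) * japaneseBracket y ^ (-s)
        ≤ 2 ^ s * japaneseBracket (x + y) ^ (-s) * japaneseBracket y ^ (-s) := by gcongr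
      _ ≤ _ := le_add_of_nonneg_left (by positivity)

variable [NormedSpace ℝ X] [FiniteDimensional ℝ X] [MeasurableSpace X] [BorelSpace X]
  {μ : Measure X} [μ.IsAddHaarMeasure] {m : ℝ}

theorem integrable_japaneseBracket_rpow_neg (hm : Module.finrank ℝ X < m) :
    Integrable (fun x : X => japaneseBracket x ^ (-m)) μ := by
  simpa only [← one_add_norm_sq_rpow] using integrable_rpow_neg_one_add_norm_sq hm

theorem integral_japaneseBracket_rpow_neg_pos (hm : Module.finrank ℝ X < m) :
    0 < ∫ x : X, japaneseBracket x ^ (-m) ∂μ := by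
  have hpos (x : X) : 0 < japaneseBracket x ^ (-m) := Real.rpow_pos_of_pos (japaneseBracket_pos x) _
  rw [integral_pos_iff_support_of_nonneg (fun x => (hpos x).le)
    (integrable_japaneseBracket_rpow_neg hm),
    Function.support_eq_univ fun x => (hpos x).ne']
  exact isOpen_univ.measure_pos μ Set.univ_nonempty

theorem integrable_japaneseBracket_rpow_neg_mul (hm : Module.finrank ℝ X < m) (a b : X) :
    Integrable (fun x => japaneseBracket (b - x) ^ (-m) * japaneseBracket (x - a) ^ (-m)) μ := by
  have hb := (integrable_japaneseBracket_rpow_neg (μ := μ) hm).comp_sub_left b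
  have ha := (integrable_japaneseBracket_rpow_neg (μ := μ) hm).comp_sub_right a
  refine hb.mul_bdd (c := 1) ha.aestronglyMeasurable (.of_forall fun x => ?_)
  have hone : 1 ≤ japaneseBracket (x - a) :=
    Real.one_le_sqrt.2 (le_add_of_nonneg_right (sq_nonneg _))
  rw [Real.norm_of_nonneg (Real.rpow_nonneg (zero_le_one.trans hone) _)]
  exact Real.rpow_le_one_of_one_le_of_nonpos hone
    (neg_nonpos.2 ((Nat.cast_nonneg _).trans hm.le))

theorem integral_japaneseBracket_rpow_neg_mul_le (hm : Module.finrank ℝ X < m) (a b : X) :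
    ∫ x, japaneseBracket (b - x) ^ (-m) * japaneseBracket (x - a) ^ (-m) ∂μ ≤
      2 ^ m * (2 * ∫ x, japaneseBracket x ^ (-m) ∂μ) * japaneseBracket (b - a) ^ (-m) := by
  have hpeetre (x : X) : japaneseBracket (b - x) ^ (-m) * japaneseBracket (x - a) ^ (-m) ≤
      2 ^ m * japaneseBracket (b - a) ^ (-m) *
        (japaneseBracket (b - x) ^ (-m) + japaneseBracket (x - a) ^ (-m)) := by
    simpa only [sub_add_sub_cancel] using
      japaneseBracket_rpow_neg_mul_le ((Nat.cast_nonneg _).trans hm.le) (b - x) (x - a)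
  have hb := (integrable_japaneseBracket_rpow_neg (μ := μ) hm).comp_sub_left b
  have ha := (integrable_japaneseBracket_rpow_neg (μ := μ) hm).comp_sub_right a
  refine (integral_mono (integrable_japaneseBracket_rpow_neg_mul hm a b)
    ((hb.add ha).const_mul _) hpeetre).trans_eq ?_
  simp only [Pi.add_apply]
  rw [integral_const_mul, integral_add hb ha,
    integral_sub_left_eq_self (fun x : X => japaneseBracket x ^ (-m)) μ b,
    integral_sub_right_eq_self (fun x : X => japaneseBracket x ^ (-m)) a]
  ring

theorem norm_integral_mul_le_of_le_japaneseBracket (hm : Module.finrank ℝ X < m)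
    [NormedAddCommGroup Y] [MeasurableSpace Y] {ν : Measure Y} {χ : Y → X} {L : ℝ≥0}
    (hχ : LipschitzWith L χ) (hχμ : MeasurePreserving χ ν μ) {A₁ A₂ : ℝ} (hA₁ : 0 ≤ A₁)
    (hA₂ : 0 ≤ A₂) {k₁ k₂ : Y → ℂ} {p : Y} {w : X}
    (h₁ : ∀ v, ‖k₁ v‖ ≤ A₁ * japaneseBracket (w - χ v) ^ (-m))
    (h₂ : ∀ v, ‖k₂ v‖ ≤ A₂ * japaneseBracket (v - p) ^ (-m)) :
    ‖∫ v, k₁ v * k₂ v ∂ν‖ ≤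
      A₁ * A₂ * ((1 + L) ^ m * (2 ^ m * (2 * ∫ x, japaneseBracket x ^ (-m) ∂μ))) *
        japaneseBracket (w - χ p) ^ (-m) := by
  have hm₀ : 0 ≤ m := (Nat.cast_nonneg _).trans hm.le
  have hint := integrable_japaneseBracket_rpow_neg_mul (μ := μ) hm (χ p) w
  let Φ (x : X) := japaneseBracket (w - x) ^ (-m) * japaneseBracket (x - χ p) ^ (-m)
  have hχp (v : Y) :
      japaneseBracket (v - p) ^ (-m) ≤ (1 + L) ^ m * japaneseBracket (χ v - χ p) ^ (-m) :=
    rpow_neg_le_mul_rpow_neg (japaneseBracket_pos _) (japaneseBracket_pos _) (by positivity) hm₀ <|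
      japaneseBracket_le_of_norm_le_mul L.2 (hχ.norm_sub_le v p)
  have hbound (v : Y) : ‖k₁ v * k₂ v‖ ≤ A₁ * A₂ * (1 + L) ^ m * Φ (χ v) := by
    have hw := (japaneseBracket_pos (w - χ v)).le
    calc ‖k₁ v * k₂ v‖
        ≤ (A₁ * japaneseBracket (w - χ v) ^ (-m)) *
            (A₂ * ((1 + L) ^ m * japaneseBracket (χ v - χ p) ^ (-m))) := by
          rw [norm_mul]
          exact mul_le_mul (h₁ v) ((h₂ v).trans (mul_le_mul_of_nonneg_left (hχp v) hA₂))
            (norm_nonneg _) (by positivity)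
      _ = A₁ * A₂ * (1 + L) ^ m * Φ (χ v) := by ring
  calc ‖∫ v, k₁ v * k₂ v ∂ν‖
      ≤ ∫ v, A₁ * A₂ * (1 + L) ^ m * Φ (χ v) ∂ν :=
        norm_integral_le_of_norm_le ((hχμ.integrable_comp_of_integrable hint).const_mul _)
          (.of_forall hbound)
    _ = A₁ * A₂ * (1 + L) ^ m * ∫ x, Φ x ∂μ := by
        rw [integral_const_mul, ← hχμ.map_eq, integral_map hχμ.aemeasurable]
        exact hχμ.map_eq ▸ hint.aestronglyMeasurable
    _ ≤ A₁ * A₂ * (1 + L) ^ m * (2 ^ m * (2 * ∫ x, japaneseBracket x ^ (-m) ∂μ) *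
          japaneseBracket (w - χ p) ^ (-m)) := by
        gcongr
        exact integral_japaneseBracket_rpow_neg_mul_le hm (χ p) w
    _ = _ := by ring

end JapaneseBracket

section SchwartzEstimates

theorem continuous_iteratedFDeriv_uncurry {W V F : Type*} [NormedAddCommGroup W] [NormedSpace ℝ W]
    [NormedAddCommGroup V] [NormedSpace ℝ V] [NormedAddCommGroup F] [NormedSpace ℝ F]
    {Γ : W × V → F} (hΓ : ContDiff ℝ ∞ Γ) (l : ℕ) :
    Continuous fun p : W × V => iteratedFDeriv ℝ l (fun y => Γ (p.1, y)) p.2 := by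
  have hcomp (p : W × V) : iteratedFDeriv ℝ l (fun y => Γ (p.1, y)) p.2 =
      (iteratedFDeriv ℝ l Γ p).compContinuousLinearMap
        fun _ => ContinuousLinearMap.inr ℝ W V := by
    have heq : (fun y => Γ (p.1, y)) =
        (fun q => Γ ((p.1, 0) + q)) ∘ ContinuousLinearMap.inr ℝ W V := by
      funext y
      simp
    have hΓ' : ContDiff ℝ ∞ fun q => Γ ((p.1, 0) + q) := hΓ.comp (contDiff_const.add contDiff_id)
    rw [heq, ContinuousLinearMap.iteratedFDeriv_comp_right _ hΓ' _ (by exact_mod_cast le_top),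
      iteratedFDeriv_comp_add_left]
    simp
  simp_rw [hcomp]
  exact (ContinuousMultilinearMap.compContinuousLinearMapL
    (fun _ => ContinuousLinearMap.inr ℝ W V)).continuous.comp
      (hΓ.continuous_iteratedFDeriv (by exact_mod_cast le_top))

variable {V : Type*} [NormedAddCommGroup V]

theorem one_add_norm_pow_le_mul_sub (x y : V) (k : ℕ) :
    (1 + ‖y‖) ^ k ≤ (1 + ‖x‖) ^ k * (1 + ‖y - x‖) ^ k := by
  rw [← mul_pow]
  gcongr
  have := norm_le_norm_add_norm_sub' y x
  nlinarith [mul_nonneg (norm_nonneg x) (norm_nonneg (y - x))]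

variable [NormedSpace ℝ V]

theorem norm_iteratedFDeriv_mul_le_of_le {a b : V → ℂ} (ha : ContDiff ℝ ∞ a) (hb : ContDiff ℝ ∞ b)
    {l : ℕ} {y : V} {A B : ℝ} (hA : ∀ i ≤ l, ‖iteratedFDeriv ℝ i a y‖ ≤ A)
    (hB : ∀ i ≤ l, ‖iteratedFDeriv ℝ i b y‖ ≤ B) :
    ‖iteratedFDeriv ℝ l (fun y => a y * b y) y‖ ≤ 2 ^ l * (A * B) := by
  have hA₀ : 0 ≤ A := (norm_nonneg _).trans (hA 0 (Nat.zero_le l))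
  calc ‖iteratedFDeriv ℝ l (fun y => a y * b y) y‖
      ≤ ∑ i ∈ Finset.range (l + 1), (l.choose i : ℝ) * ‖iteratedFDeriv ℝ i a y‖ *
          ‖iteratedFDeriv ℝ (l - i) b y‖ :=
        norm_iteratedFDeriv_mul_le ha hb y (by exact_mod_cast le_top)
    _ ≤ ∑ i ∈ Finset.range (l + 1), (l.choose i : ℝ) * A * B := by
        gcongr with i hi
        · exact hA i (Finset.mem_range_succ_iff.1 hi)
        · exact hB _ (Nat.sub_le l i)
    _ = 2 ^ l * (A * B) := by
        rw [← Finset.sum_mul, ← Finset.sum_mul, ← Nat.cast_sum, Nat.sum_range_choose, mul_assoc]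
        norm_cast

theorem exists_norm_iteratedFDeriv_translate_le (g : 𝓢(V, ℂ)) (k l : ℕ) :
    ∃ C, 0 ≤ C ∧ ∀ n ≤ l, ∀ x y,
      ‖iteratedFDeriv ℝ n (fun y => g (y - x)) y‖ ≤ C / (1 + ‖y - x‖) ^ k :=
  ⟨2 ^ k * (Finset.Iic (k, l)).sup (fun p => SchwartzMap.seminorm ℂ p.1 p.2) g, by positivity,
    fun n hn x y => by
      rw [iteratedFDeriv_comp_sub (f := g), le_div_iff₀' (by positivity)]
      exact SchwartzMap.one_add_le_sup_seminorm_apply (m := (k, l)) le_rfl hn g (y - x)⟩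

/-- The product `y ↦ g (y - x) * f y`: the localisation of `f` around `x` by the window `g`, whose
Fourier transform is the short-time Fourier transform of `f`. -/
def mulTranslate (g f : 𝓢(V, ℂ)) (x : V) : 𝓢(V, ℂ) :=
  SchwartzMap.smulLeftCLM ℂ (fun y => g (y - x)) f

theorem mulTranslate_apply (g f : 𝓢(V, ℂ)) (x y : V) :
    mulTranslate g f x y = g (y - x) * f y :=
  SchwartzMap.smulLeftCLM_apply_apply (SchwartzMap.compSubConstCLM ℂ x g).hasTemperateGrowth f y

theorem exists_pow_mul_seminorm_mulTranslate_le (g f : 𝓢(V, ℂ)) (N k l : ℕ) :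
    ∃ C, ∀ x, (1 + ‖x‖) ^ N * SchwartzMap.seminorm ℂ k l (mulTranslate g f x) ≤ C := by
  obtain ⟨A, hA₀, hA⟩ := exists_norm_iteratedFDeriv_translate_le g N l
  obtain ⟨B, hB₀, hB⟩ := exists_norm_iteratedFDeriv_translate_le f (k + N) l
  refine ⟨2 ^ l * (A * B), fun x => ?_⟩
  rw [← le_div_iff₀' (by positivity)]
  refine SchwartzMap.seminorm_le_bound ℂ k l _ (by positivity) fun y => ?_
  rw [le_div_iff₀' (by positivity)]
  have hxy : (1 + ‖x‖) ^ N ≤ (1 + ‖y‖) ^ N * (1 + ‖y - x‖) ^ N :=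
    norm_sub_rev x y ▸ one_add_norm_pow_le_mul_sub y x N
  have hLeibniz := norm_iteratedFDeriv_mul_le_of_le (l := l) (y := y)
    ((g.smooth ⊤).comp (contDiff_id.sub (contDiff_const (c := x)))) (f.smooth ⊤)
    (fun i hi => hA i hi x y) (fun i hi => by simpa using hB i hi 0 y)
  calc (1 + ‖x‖) ^ N * (‖y‖ ^ k * ‖iteratedFDeriv ℝ l (mulTranslate g f x) y‖)
      ≤ ((1 + ‖y‖) ^ N * (1 + ‖y - x‖) ^ N) * ((1 + ‖y‖) ^ k *
          (2 ^ l * (A / (1 + ‖y - x‖) ^ N * (B / (1 + ‖y‖) ^ (k + N))))) := by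
        gcongr
        · exact le_add_of_nonneg_left zero_le_one
        · exact (funext (mulTranslate_apply g f x) : ⇑(mulTranslate g f x) = _) ▸ hLeibniz
    _ = 2 ^ l * (A * B) := by
        rw [pow_add]
        field_simp

theorem exists_pow_mul_sup_seminorm_mulTranslate_le (g f : 𝓢(V, ℂ)) (N : ℕ) (s : Finset (ℕ × ℕ)) :
    ∃ C, ∀ x, (1 + ‖x‖) ^ N * s.sup (schwartzSeminormFamily ℂ V ℂ) (mulTranslate g f x) ≤ C := by
  choose C hC using fun i : ℕ × ℕ => exists_pow_mul_seminorm_mulTranslate_le g f N i.1 i.2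
  refine ⟨∑ i ∈ s, |C i|, fun x => ?_⟩
  rw [← le_div_iff₀' (by positivity)]
  refine Seminorm.finset_sup_apply_le (by positivity) fun i hi => ?_
  rw [le_div_iff₀' (by positivity)]
  calc (1 + ‖x‖) ^ N * SchwartzMap.seminorm ℂ i.1 i.2 (mulTranslate g f x) ≤ |C i| :=
        (hC i x).trans (le_abs_self _)
    _ ≤ _ := Finset.single_le_sum (f := fun i => |C i|) (fun j _ => abs_nonneg _) hi

end SchwartzEstimates

section TimeFrequencyShift

variable {V : Type*} [NormedAddCommGroup V]

variable (V) in
/-- The phase space `V × V` of positions and frequencies; `WithLp 2` gives it the Euclidean norm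
instead of the sup norm of `V × V`. -/
abbrev PhaseSpace : Type _ := WithLp 2 (V × V)

theorem one_add_norm_le_mul_fst_snd (w : PhaseSpace V) :
    1 + ‖w‖ ≤ (1 + ‖w.fst‖) * (1 + ‖w.snd‖) := by
  have hprod := mul_nonneg (norm_nonneg w.fst) (norm_nonneg w.snd)
  have hsq := WithLp.prod_norm_sq_eq_of_L2 w
  have : ‖w‖ ≤ ‖w.fst‖ + ‖w.snd‖ := le_of_sq_le_sq (by nlinarith) (by positivity)
  nlinarith

variable [InnerProductSpace ℝ V]

/-- The plane wave `y ↦ e^{i y·ξ}` of frequency `ξ`. -/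
def planeWave (ξ y : V) : ℂ := cexp (I * (⟪y, ξ⟫ : ℂ))

theorem contDiff_planeWave_uncurry : ContDiff ℝ ∞ fun p : V × V => planeWave p.1 p.2 :=
  (contDiff_const.mul (Complex.ofRealCLM.contDiff.comp (contDiff_snd.inner ℝ contDiff_fst))).cexp

theorem contDiff_planeWave (ξ : V) : ContDiff ℝ ∞ (planeWave ξ) :=
  contDiff_planeWave_uncurry.comp (contDiff_const.prodMk contDiff_id)

theorem norm_planeWave (ξ y : V) : ‖planeWave ξ y‖ = 1 := by
  rw [planeWave, mul_comm, Complex.norm_exp_ofReal_mul_I]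

theorem fderiv_planeWave (ξ : V) :
    fderiv ℝ (planeWave ξ) =
      (ContinuousLinearMap.lsmul ℝ ℂ).flip (I • (Complex.ofRealCLM ∘L innerSL ℝ ξ)) ∘
        planeWave ξ := by
  funext y
  have hphase : HasFDerivAt (fun y : V => I * ((⟪ξ, y⟫ : ℝ) : ℂ))
      (I • (Complex.ofRealCLM ∘L innerSL ℝ ξ)) y :=
    (Complex.ofRealCLM ∘L innerSL ℝ ξ).hasFDerivAt.const_mul I
  have hwave : planeWave ξ = fun y => cexp (I * (⟪ξ, y⟫ : ℂ)) :=
    funext fun y => by rw [planeWave, real_inner_comm]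
  rw [hwave]
  exact hphase.cexp.fderiv

theorem norm_iteratedFDeriv_planeWave_le (ξ y : V) (n : ℕ) :
    ‖iteratedFDeriv ℝ n (planeWave ξ) y‖ ≤ ‖ξ‖ ^ n := by
  induction n with
  | zero => simp [norm_planeWave]
  | succ n ih =>
    have hΛ : ‖(ContinuousLinearMap.lsmul ℝ ℂ).flip (I • (Complex.ofRealCLM ∘L innerSL ℝ ξ))‖ ≤
        ‖ξ‖ := by
      refine ContinuousLinearMap.opNorm_le_bound _ (norm_nonneg ξ) fun c => ?_
      refine ContinuousLinearMap.opNorm_le_bound _ (by positivity) fun v => ?_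
      simpa [mul_assoc, mul_left_comm ‖ξ‖] using
        mul_le_mul_of_nonneg_left (abs_real_inner_le_norm ξ v) (norm_nonneg c)
    rw [← norm_iteratedFDeriv_fderiv, fderiv_planeWave, pow_succ']
    refine (ContinuousLinearMap.norm_iteratedFDeriv_comp_left _
      (contDiff_planeWave ξ).contDiffAt (by exact_mod_cast le_top)).trans ?_
    gcongr

theorem hasTemperateGrowth_planeWave (ξ : V) : (planeWave ξ).HasTemperateGrowth :=
  ⟨contDiff_planeWave ξ, fun n => ⟨0, ‖ξ‖ ^ n, fun y => by
    simpa using norm_iteratedFDeriv_planeWave_le ξ y n⟩⟩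

theorem finrank_phaseSpace [FiniteDimensional ℝ V] :
    Module.finrank ℝ (PhaseSpace V) = 2 * Module.finrank ℝ V := by
  rw [(WithLp.linearEquiv 2 ℝ (V × V)).finrank_eq, Module.finrank_prod, two_mul]

/-- The time-frequency shift `π(x, ξ)g (y) = e^{i y·ξ} g(y - x)`, the wave packet at `(x, ξ)` with
window `g`. -/
def timeFreqShift (w : PhaseSpace V) : 𝓢(V, ℂ) →L[ℂ] 𝓢(V, ℂ) :=
  SchwartzMap.smulLeftCLM ℂ (planeWave w.snd) ∘L SchwartzMap.compSubConstCLM ℂ w.fst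

theorem timeFreqShift_apply (w : PhaseSpace V) (g : 𝓢(V, ℂ)) (y : V) :
    timeFreqShift w g y = planeWave w.snd y * g (y - w.fst) :=
  SchwartzMap.smulLeftCLM_apply_apply (hasTemperateGrowth_planeWave w.snd) _ y

theorem coe_timeFreqShift (w : PhaseSpace V) (g : 𝓢(V, ℂ)) :
    ⇑(timeFreqShift w g) = fun y => planeWave w.snd y * g (y - w.fst) :=
  funext (timeFreqShift_apply w g)

theorem exists_seminorm_timeFreqShift_le (g : 𝓢(V, ℂ)) (k l : ℕ) :
    ∃ C, ∀ w : PhaseSpace V,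
      SchwartzMap.seminorm ℂ k l (timeFreqShift w g) ≤ C * (1 + ‖w‖) ^ (k + l) := by
  obtain ⟨B, hB₀, hB⟩ := exists_norm_iteratedFDeriv_translate_le g k l
  refine ⟨2 ^ l * B, fun w =>
    SchwartzMap.seminorm_le_bound ℂ k l _ (by positivity) fun y => ?_⟩
  have hfst : ‖w.fst‖ ≤ ‖w‖ := WithLp.norm_fst_le V w
  have hsnd : ‖w.snd‖ ≤ ‖w‖ := WithLp.norm_snd_le V w
  have hwave (i : ℕ) (hi : i ≤ l) :
      ‖iteratedFDeriv ℝ i (planeWave w.snd) y‖ ≤ (1 + ‖w‖) ^ l :=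
    calc ‖iteratedFDeriv ℝ i (planeWave w.snd) y‖ ≤ ‖w.snd‖ ^ i :=
          norm_iteratedFDeriv_planeWave_le w.snd y i
      _ ≤ (1 + ‖w‖) ^ i := by gcongr; linarith
      _ ≤ (1 + ‖w‖) ^ l := pow_le_pow_right₀ (by linarith [norm_nonneg w]) hi
  have hLeibniz := norm_iteratedFDeriv_mul_le_of_le (contDiff_planeWave w.snd)
    ((g.smooth ⊤).comp (contDiff_id.sub (contDiff_const (c := w.fst)))) hwave
    fun i hi => hB i hi w.fst y
  calc ‖y‖ ^ k * ‖iteratedFDeriv ℝ l (timeFreqShift w g) y‖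
      ≤ ((1 + ‖w‖) ^ k * (1 + ‖y - w.fst‖) ^ k) *
          (2 ^ l * ((1 + ‖w‖) ^ l * (B / (1 + ‖y - w.fst‖) ^ k))) := by
        gcongr
        · calc ‖y‖ ^ k ≤ (1 + ‖y‖) ^ k := by gcongr; linarith
            _ ≤ (1 + ‖w.fst‖) ^ k * (1 + ‖y - w.fst‖) ^ k := one_add_norm_pow_le_mul_sub _ y k
            _ ≤ _ := by gcongr
        · exact coe_timeFreqShift w g ▸ hLeibniz
    _ = 2 ^ l * B * (1 + ‖w‖) ^ (k + l) := by
        rw [pow_add]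
        field_simp

theorem continuous_timeFreqShift [ProperSpace V] (g : 𝓢(V, ℂ)) :
    Continuous fun w : PhaseSpace V => timeFreqShift w g := by
  refine continuous_of_continuous_iteratedFDeriv (fun l => ?_) fun k l w => ?_
  · have hsmooth : ContDiff ℝ ∞ fun p : (V × V) × V => planeWave p.1.2 p.2 * g (p.2 - p.1.1) :=
      (contDiff_planeWave_uncurry.comp
        ((contDiff_snd.comp contDiff_fst).prodMk contDiff_snd)).mul
        ((g.smooth ⊤).comp (contDiff_snd.sub (contDiff_fst.comp contDiff_fst)))
    simp_rw [coe_timeFreqShift]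
    exact (continuous_iteratedFDeriv_uncurry hsmooth l).comp
      (g := fun p : (V × V) × V => _) (f := fun p : PhaseSpace V × V => ((p.1.fst, p.1.snd), p.2))
      (by fun_prop)
  · obtain ⟨C, hC⟩ := exists_seminorm_timeFreqShift_le g k l
    have hcont : Continuous fun w : PhaseSpace V => C * (1 + ‖w‖) ^ (k + l) := by fun_prop
    exact (hcont.tendsto w).isBoundedUnder_le.mono_le (.of_forall hC)

end TimeFrequencyShift

section ShortTimeFourierTransform

variable {V : Type*} [NormedAddCommGroup V] [InnerProductSpace ℝ V]

/-- Complex conjugation of Schwartz functions; the sesquilinear pairing `⟨u, φ⟩` is the bilinear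
pairing of `u` with `conjSchwartz φ`. -/
def conjSchwartz : 𝓢(V, ℂ) →L[ℝ] 𝓢(V, ℂ) :=
  SchwartzMap.postcompCLM Complex.conjCLE.toContinuousLinearMap

theorem conjSchwartz_apply (g : 𝓢(V, ℂ)) (y : V) :
    conjSchwartz g y = starRingEnd ℂ (g y) := rfl

theorem conj_planeWave (ξ y : V) : starRingEnd ℂ (planeWave ξ y) = cexp (-I * (⟪y, ξ⟫ : ℂ)) := by
  rw [planeWave, ← Complex.exp_conj, map_mul, Complex.conj_I, Complex.conj_ofReal]

theorem conjSchwartz_timeFreqShift_apply (w : PhaseSpace V) (g : 𝓢(V, ℂ)) (y : V) :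
    conjSchwartz (timeFreqShift w g) y =
      cexp (-I * (⟪y, w.snd⟫ : ℂ)) * conjSchwartz g (y - w.fst) := by
  rw [conjSchwartz_apply, timeFreqShift_apply, map_mul, conj_planeWave, conjSchwartz_apply]

variable [FiniteDimensional ℝ V] [MeasurableSpace V] [BorelSpace V]

/-- The short-time Fourier transform `⟨f, π(w)g⟩` of `f` with window `g`, at the phase space
point `w`. -/
def stft (g f : 𝓢(V, ℂ)) (w : PhaseSpace V) : ℂ :=
  ∫ y, f y * conjSchwartz (timeFreqShift w g) y

theorem continuous_stft (g f : 𝓢(V, ℂ)) : Continuous (stft g f) := by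
  have hpair : Continuous fun u : 𝓢(V, ℂ) => ∫ y, f y * u y := by
    refine ((SchwartzMap.integralCLM ℂ volume).continuous.comp
      (SchwartzMap.smulLeftCLM ℂ f).continuous).congr fun u => ?_
    simp only [Function.comp_apply, SchwartzMap.integralCLM_apply,
      SchwartzMap.smulLeftCLM_apply_apply f.hasTemperateGrowth, smul_eq_mul]
  exact hpair.comp (conjSchwartz.continuous.comp (continuous_timeFreqShift g))

theorem stft_eq_fourier (g f : 𝓢(V, ℂ)) (w : PhaseSpace V) :
    stft g f w = 𝓕 (mulTranslate (conjSchwartz g) f w.fst) ((2 * π)⁻¹ • w.snd) := by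
  rw [SchwartzMap.fourier_coe, Real.fourier_eq']
  refine integral_congr_ae (.of_forall fun y => ?_)
  have hphase : -2 * π * ⟪y, (2 * π)⁻¹ • w.snd⟫ = -⟪y, w.snd⟫ := by
    rw [inner_smul_right]
    field_simp
  simp only [hphase, mulTranslate_apply, conjSchwartz_timeFreqShift_apply, smul_eq_mul]
  push_cast
  ring_nf

theorem exists_pow_mul_norm_fourier_le (N : ℕ) :
    ∃ (C : ℝ) (s : Finset (ℕ × ℕ)), 0 ≤ C ∧ ∀ (h : 𝓢(V, ℂ)) (η : V),
      (1 + ‖η‖) ^ N * ‖𝓕 h η‖ ≤ C * s.sup (schwartzSeminormFamily ℂ V ℂ) h := by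
  let q : Seminorm ℂ 𝓢(V, ℂ) :=
    ((Finset.Iic (N, 0)).sup (schwartzSeminormFamily ℂ V ℂ)).comp
      (SchwartzMap.fourierTransformCLM ℂ : 𝓢(V, ℂ) →L[ℂ] 𝓢(V, ℂ)).toLinearMap
  have hq : Continuous q :=
    (Seminorm.continuous_finsetSup fun i _ =>
      (schwartz_withSeminorms ℂ V ℂ).continuous_seminorm i).comp
      (SchwartzMap.fourierTransformCLM ℂ).continuous
  obtain ⟨s, D, -, hD⟩ := Seminorm.bound_of_continuous (schwartz_withSeminorms ℂ V ℂ) q hq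
  refine ⟨2 ^ N * D, s, by positivity, fun h η => ?_⟩
  calc (1 + ‖η‖) ^ N * ‖𝓕 h η‖ ≤ 2 ^ N * q h := by
        rw [← norm_iteratedFDeriv_zero (𝕜 := ℝ)]
        exact SchwartzMap.one_add_le_sup_seminorm_apply (m := (N, 0)) le_rfl le_rfl (𝓕 h) η
    _ ≤ 2 ^ N * (D * s.sup (schwartzSeminormFamily ℂ V ℂ) h) :=
        mul_le_mul_of_nonneg_left (hD h) (by positivity)
    _ = _ := (mul_assoc _ _ _).symm

theorem exists_pow_mul_norm_stft_le (g f : 𝓢(V, ℂ)) (N : ℕ) :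
    ∃ C, ∀ w, (1 + ‖w‖) ^ N * ‖stft g f w‖ ≤ C := by
  obtain ⟨A, s, hA₀, hA⟩ := exists_pow_mul_norm_fourier_le (V := V) N
  obtain ⟨B, hB⟩ := exists_pow_mul_sup_seminorm_mulTranslate_le (conjSchwartz g) f N s
  refine ⟨(2 * π + 1) ^ N * (A * B), fun w => ?_⟩
  set η : V := (2 * π)⁻¹ • w.snd with hη
  have hsnd : 1 + ‖w.snd‖ ≤ (2 * π + 1) * (1 + ‖η‖) := by
    have : ‖w.snd‖ = 2 * π * ‖η‖ := by
      rw [hη, norm_smul, Real.norm_of_nonneg (by positivity)]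
      field_simp
    rw [this]
    nlinarith [norm_nonneg η, Real.pi_pos]
  calc (1 + ‖w‖) ^ N * ‖stft g f w‖
      ≤ ((1 + ‖w.fst‖) * ((2 * π + 1) * (1 + ‖η‖))) ^ N * ‖stft g f w‖ := by
        gcongr
        exact (one_add_norm_le_mul_fst_snd w).trans (by gcongr)
    _ = (2 * π + 1) ^ N * ((1 + ‖w.fst‖) ^ N * ((1 + ‖η‖) ^ N *
          ‖𝓕 (mulTranslate (conjSchwartz g) f w.fst) η‖)) := by
        rw [stft_eq_fourier, mul_pow, mul_pow]
        ring
    _ ≤ (2 * π + 1) ^ N * ((1 + ‖w.fst‖) ^ N * (A *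
          s.sup (schwartzSeminormFamily ℂ V ℂ) (mulTranslate (conjSchwartz g) f w.fst))) := by
        gcongr ?_ * (?_ * ?_)
        exact hA _ η
    _ = (2 * π + 1) ^ N * (A * ((1 + ‖w.fst‖) ^ N *
          s.sup (schwartzSeminormFamily ℂ V ℂ) (mulTranslate (conjSchwartz g) f w.fst))) := by
        ring
    _ ≤ (2 * π + 1) ^ N * (A * B) := by
        gcongr
        exact hB w.fst

theorem integrable_pow_mul_norm_stft (g f : 𝓢(V, ℂ)) (k : ℕ) :
    Integrable fun w => (1 + ‖w‖) ^ k * ‖stft g f w‖ := by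
  let r : ℕ := 2 * Module.finrank ℝ V + 1
  obtain ⟨C, hC⟩ := exists_pow_mul_norm_stft_le g f (k + r)
  have hr : (Module.finrank ℝ (PhaseSpace V) : ℝ) < r := by
    rw [finrank_phaseSpace]
    exact_mod_cast Nat.lt_succ_self _
  refine ((integrable_one_add_norm hr).const_mul C).mono' ?_ (.of_forall fun w => ?_)
  · exact (((continuous_const.add continuous_norm).pow k).mul
      (continuous_stft g f).norm).aestronglyMeasurable
  · rw [Real.norm_of_nonneg (by positivity), Real.rpow_neg (by positivity), Real.rpow_natCast,
      ← div_eq_mul_inv, le_div_iff₀ (by positivity)]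
    calc (1 + ‖w‖) ^ k * ‖stft g f w‖ * (1 + ‖w‖) ^ r
        = (1 + ‖w‖) ^ (k + r) * ‖stft g f w‖ := by ring
      _ ≤ C := hC w

theorem integrable_seminorm_stft_smul_timeFreqShift (g f : 𝓢(V, ℂ)) (k l : ℕ) :
    Integrable fun w => SchwartzMap.seminorm ℂ k l (stft g f w • timeFreqShift w g) := by
  obtain ⟨C, hC⟩ := exists_seminorm_timeFreqShift_le g k l
  refine ((integrable_pow_mul_norm_stft g f (k + l)).const_mul C).mono' ?_
    (.of_forall fun w => ?_)
  · exact (((schwartz_withSeminorms ℂ V ℂ).continuous_seminorm (k, l)).comp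
      ((continuous_stft g f).smul (continuous_timeFreqShift g))).aestronglyMeasurable
  · rw [Real.norm_of_nonneg (apply_nonneg _ _), map_smul_eq_mul]
    calc ‖stft g f w‖ * SchwartzMap.seminorm ℂ k l (timeFreqShift w g)
        ≤ ‖stft g f w‖ * (C * (1 + ‖w‖) ^ (k + l)) :=
          mul_le_mul_of_nonneg_left (hC w) (norm_nonneg _)
      _ = C * ((1 + ‖w‖) ^ (k + l) * ‖stft g f w‖) := by ring

theorem integral_stft_mul_planeWave (g f : 𝓢(V, ℂ)) (x y : V) :
    ∫ ξ, stft g f (WithLp.toLp 2 (x, ξ)) * planeWave ξ y =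
      ((2 * π) ^ Module.finrank ℝ V : ℝ) * mulTranslate (conjSchwartz g) f x y := by
  let Φ : V → ℂ := fun η =>
    cexp ((2 * π * ⟪η, y⟫ : ℝ) * I) • 𝓕 (mulTranslate (conjSchwartz g) f x) η
  have hΦ : ∫ η, Φ η = mulTranslate (conjSchwartz g) f x y := by
    rw [← Real.fourierInv_eq', ← SchwartzMap.fourierInv_coe, FourierTransform.fourierInv_fourier_eq]
  have hscale (ξ : V) :
      stft g f (WithLp.toLp 2 (x, ξ)) * planeWave ξ y = Φ ((2 * π)⁻¹ • ξ) := by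
    have hphase : 2 * π * ⟪(2 * π)⁻¹ • ξ, y⟫ = ⟪y, ξ⟫ := by
      rw [real_inner_smul_left, real_inner_comm]
      field_simp
    simp only [Φ, stft_eq_fourier, WithLp.toLp_fst, WithLp.toLp_snd, planeWave, hphase, smul_eq_mul]
    ring_nf
  simp_rw [hscale]
  rw [Measure.integral_comp_inv_smul_of_nonneg volume Φ (by positivity), hΦ, Complex.real_smul]

theorem integrable_stft_mul_timeFreqShift (g f : 𝓢(V, ℂ)) (y : V) :
    Integrable fun w => stft g f w * timeFreqShift w g y := by
  have heval : Continuous fun w : PhaseSpace V => timeFreqShift w g y := by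
    simp only [timeFreqShift_apply, planeWave]
    fun_prop
  refine (integrable_seminorm_stft_smul_timeFreqShift g f 0 0).mono'
    ((continuous_stft g f).mul heval).aestronglyMeasurable (.of_forall fun w => ?_)
  exact SchwartzMap.norm_le_seminorm ℂ (stft g f w • timeFreqShift w g) y

theorem integral_stft_mul_timeFreqShift (g f : 𝓢(V, ℂ)) (y : V) :
    ∫ w, stft g f w * timeFreqShift w g y =
      ((2 * π) ^ Module.finrank ℝ V * ∫ x, ‖g x‖ ^ 2 : ℝ) * f y := by
  have hfiber (x : V) : ∫ ξ, stft g f (WithLp.toLp 2 (x, ξ)) *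
      timeFreqShift (WithLp.toLp 2 (x, ξ)) g y =
        ((2 * π) ^ Module.finrank ℝ V : ℝ) * (‖g (y - x)‖ ^ 2 : ℝ) * f y := by
    simp only [timeFreqShift_apply, WithLp.toLp_fst, WithLp.toLp_snd, ← mul_assoc]
    rw [integral_mul_const, integral_stft_mul_planeWave, mulTranslate_apply, conjSchwartz_apply]
    push_cast
    rw [← Complex.mul_conj']
    ring
  have hemb := (MeasurableEquiv.toLp 2 (V × V)).measurableEmbedding
  have hint := ((WithLp.volume_preserving_toLp V V).integrable_comp_emb hemb).2
    (integrable_stft_mul_timeFreqShift g f y)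
  calc ∫ w, stft g f w * timeFreqShift w g y
      = ∫ p : V × V, stft g f (WithLp.toLp 2 p) * timeFreqShift (WithLp.toLp 2 p) g y :=
        ((WithLp.volume_preserving_toLp V V).integral_comp hemb _).symm
    _ = ∫ x, ∫ ξ, stft g f (WithLp.toLp 2 (x, ξ)) * timeFreqShift (WithLp.toLp 2 (x, ξ)) g y :=
        integral_prod _ hint
    _ = ∫ x, ((2 * π) ^ Module.finrank ℝ V : ℝ) * (‖g (y - x)‖ ^ 2 : ℝ) * f y := by
        simp only [hfiber]
    _ = ((2 * π) ^ Module.finrank ℝ V * ∫ x, ‖g x‖ ^ 2 : ℝ) * f y := by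
        rw [integral_mul_const, integral_const_mul, integral_complex_ofReal,
          integral_sub_left_eq_self (fun x => ‖g x‖ ^ 2) volume y, Complex.ofReal_mul]

theorem apply_eq_integral_stft (g f : 𝓢(V, ℂ)) (lam : 𝓢(V, ℂ) →L[ℂ] ℂ) :
    ((2 * π) ^ Module.finrank ℝ V * ∫ x, ‖g x‖ ^ 2 : ℝ) * lam f =
      ∫ w, stft g f w * lam (timeFreqShift w g) := by
  have hpointwise (y : V) : (((2 * π) ^ Module.finrank ℝ V * ∫ x, ‖g x‖ ^ 2 : ℝ) • f) y =
      ∫ w, (stft g f w • timeFreqShift w g) y := by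
    simpa using (integral_stft_mul_timeFreqShift g f y).symm
  simpa using clm_apply_eq_integral ((continuous_stft g f).smul (continuous_timeFreqShift g))
    (integrable_seminorm_stft_smul_timeFreqShift g f) hpointwise lam

end ShortTimeFourierTransform

section Composition

variable {V : Type*} [NormedAddCommGroup V] [InnerProductSpace ℝ V] [FiniteDimensional ℝ V]
  [MeasurableSpace V] [BorelSpace V] {m : ℝ}

theorem exists_integral_norm_sq_mul_norm_comp_le (hm : 2 * (Module.finrank ℝ V : ℝ) < m)
    (L : ℝ≥0) :
    ∃ C > 0, ∀ (g : 𝓢(V, ℂ)) (χ₁ χ₂ : PhaseSpace V → PhaseSpace V), LipschitzWith L χ₁ →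
      MeasurePreserving χ₁ → ∀ (T₁ : 𝓢(V, ℂ) →L[ℂ] 𝓢'(V, ℂ)) (T₂ : 𝓢(V, ℂ) → 𝓢(V, ℂ)) (A₁ A₂ : ℝ),
      0 ≤ A₁ → 0 ≤ A₂ →
      (∀ z w, ‖T₁ (timeFreqShift z g) (conjSchwartz (timeFreqShift w g))‖ ≤
        A₁ * japaneseBracket (w - χ₁ z) ^ (-m)) →
      (∀ z w, ‖stft g (T₂ (timeFreqShift z g)) w‖ ≤ A₂ * japaneseBracket (w - χ₂ z) ^ (-m)) →
      ∀ z w, (∫ x, ‖g x‖ ^ 2) *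
          ‖T₁ (T₂ (timeFreqShift z g)) (conjSchwartz (timeFreqShift w g))‖ ≤
        C * A₁ * A₂ * japaneseBracket (w - χ₁ (χ₂ z)) ^ (-m) := by
  have hm' : Module.finrank ℝ (PhaseSpace V) < m := by
    rw [finrank_phaseSpace]
    exact_mod_cast hm
  have hJ := integral_japaneseBracket_rpow_neg_pos (μ := (volume : Measure (PhaseSpace V))) hm'
  set K := (1 + L : ℝ) ^ m * (2 ^ m * (2 * ∫ v : PhaseSpace V, japaneseBracket v ^ (-m)))
  refine ⟨((2 * π) ^ Module.finrank ℝ V)⁻¹ * K, by positivity, ?_⟩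
  intro g χ₁ χ₂ hχ₁ hχ₁μ T₁ T₂ A₁ A₂ hA₁ hA₂ hT₁ hT₂ z w
  let lam : 𝓢(V, ℂ) →L[ℂ] ℂ :=
    PointwiseConvergenceCLM.evalCLM (RingHom.id ℂ) ℂ (conjSchwartz (timeFreqShift w g)) ∘L T₁
  have hrep := apply_eq_integral_stft g (T₂ (timeFreqShift z g)) lam
  have hbound := norm_integral_mul_le_of_le_japaneseBracket (k₁ := fun v => lam (timeFreqShift v g))
    hm' hχ₁ hχ₁μ hA₁ hA₂ (fun v => hT₁ v w) (hT₂ z)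
  have hint : 0 ≤ ∫ x, ‖g x‖ ^ 2 := integral_nonneg fun x => by positivity
  simp_rw [mul_comm (lam _), ← hrep] at hbound
  rw [norm_mul, Complex.norm_of_nonneg (mul_nonneg (by positivity) hint), mul_assoc] at hbound
  calc (∫ x, ‖g x‖ ^ 2) * ‖lam (T₂ (timeFreqShift z g))‖
      ≤ ((2 * π) ^ Module.finrank ℝ V)⁻¹ *
          (A₁ * A₂ * K * japaneseBracket (w - χ₁ (χ₂ z)) ^ (-m)) :=
        (le_inv_mul_iff₀ (by positivity)).2 hbound
    _ = ((2 * π) ^ Module.finrank ℝ V)⁻¹ * K * A₁ * A₂ *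
          japaneseBracket (w - χ₁ (χ₂ z)) ^ (-m) := by ring

end Composition

section GaussianWavePackets

variable {V : Type*} [NormedAddCommGroup V]

theorem japaneseBracket_phaseSpace_rpow_neg (z : PhaseSpace V) (m : ℝ) :
    japaneseBracket z ^ (-m) = (1 + (‖z.fst‖ ^ 2 + ‖z.snd‖ ^ 2)) ^ (-(m / 2)) := by
  rw [← one_add_norm_sq_rpow, WithLp.prod_norm_sq_eq_of_L2, neg_div]

theorem lipschitzWith_toLp_comp_ofLp {L : ℝ≥0} {χ : V × V → V × V}
    (hχ : ∀ a b, √(‖(χ a - χ b).1‖ ^ 2 + ‖(χ a - χ b).2‖ ^ 2) ≤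
      L * √(‖(a - b).1‖ ^ 2 + ‖(a - b).2‖ ^ 2)) :
    LipschitzWith L fun z : PhaseSpace V => (WithLp.toLp 2 (χ z.ofLp) : PhaseSpace V) :=
  LipschitzWith.of_dist_le_mul fun a b => by
    rw [dist_eq_norm, dist_eq_norm, WithLp.prod_norm_eq_of_L2, WithLp.prod_norm_eq_of_L2]
    exact hχ a.ofLp b.ofLp

variable [InnerProductSpace ℝ V] [FiniteDimensional ℝ V] [MeasurableSpace V] [BorelSpace V]

theorem integral_norm_gaussian_sq_pos : 0 < ∫ x : V, ‖(rexp (-‖x‖ ^ 2 / 2) : ℂ)‖ ^ 2 := by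
  have hsq (x : V) : ‖(rexp (-‖x‖ ^ 2 / 2) : ℂ)‖ ^ 2 = rexp (-1 * ‖x‖ ^ 2) := by
    rw [Complex.norm_of_nonneg (Real.exp_pos _).le, ← Real.exp_nat_mul]
    ring_nf
  simp only [hsq]
  rw [GaussianFourier.integral_rexp_neg_mul_sq_norm one_pos]
  positivity

theorem measurePreserving_toLp_comp_ofLp {χ : V × V → V × V} (hχ : MeasurePreserving χ) :
    MeasurePreserving fun z : PhaseSpace V => (WithLp.toLp 2 (χ z.ofLp) : PhaseSpace V) :=
  (WithLp.volume_preserving_toLp V V).comp (hχ.comp (WithLp.volume_preserving_ofLp V V))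

theorem stmt4_general {m : ℝ} (hm : 2 * (Module.finrank ℝ V : ℝ) < m) (L : ℝ≥0) :
    ∃ C > (0 : ℝ), ∀ (G Gbar : V × V → 𝓢(V, ℂ)),
      (∀ z y, G z y = cexp (I * (⟪y, z.2⟫ : ℂ)) * rexp (-‖y - z.1‖ ^ 2 / 2)) →
      (∀ z y, Gbar z y = cexp (-I * (⟪y, z.2⟫ : ℂ)) * rexp (-‖y - z.1‖ ^ 2 / 2)) →
      ∀ χ₁ : V × V → V × V,
        (∀ a b, √(‖(χ₁ a - χ₁ b).1‖ ^ 2 + ‖(χ₁ a - χ₁ b).2‖ ^ 2) ≤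
          L * √(‖(a - b).1‖ ^ 2 + ‖(a - b).2‖ ^ 2)) →
        MeasurePreserving χ₁ →
      ∀ (χ₂ : V × V → V × V) (T₁ : 𝓢(V, ℂ) →L[ℂ] 𝓢'(V, ℂ)) (T₂ : 𝓢(V, ℂ) → 𝓢(V, ℂ)) (A₁ A₂ : ℝ),
        0 ≤ A₁ → 0 ≤ A₂ →
      (∀ z w, ‖T₁ (G z) (Gbar w)‖ ≤
        A₁ * (1 + (‖(w - χ₁ z).1‖ ^ 2 + ‖(w - χ₁ z).2‖ ^ 2)) ^ (-(m / 2))) →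
      (∀ z w, ‖∫ y, T₂ (G z) y * Gbar w y‖ ≤
        A₂ * (1 + (‖(w - χ₂ z).1‖ ^ 2 + ‖(w - χ₂ z).2‖ ^ 2)) ^ (-(m / 2))) →
      ∀ z w, ‖T₁ (T₂ (G z)) (Gbar w)‖ ≤
        C * A₁ * A₂ *
          (1 + (‖(w - χ₁ (χ₂ z)).1‖ ^ 2 + ‖(w - χ₁ (χ₂ z)).2‖ ^ 2)) ^ (-(m / 2)) := by
  obtain ⟨C, hC, hcomp⟩ := exists_integral_norm_sq_mul_norm_comp_le hm L
  have hN := integral_norm_gaussian_sq_pos (V := V)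
  set N := ∫ x : V, ‖(rexp (-‖x‖ ^ 2 / 2) : ℂ)‖ ^ 2
  refine ⟨N⁻¹ * C, by positivity, ?_⟩
  intro G Gbar hG hGbar χ₁ hχ₁ hχ₁μ χ₂ T₁ T₂ A₁ A₂ hA₁ hA₂ hT₁ hT₂ z w
  have hwindow (x : V) : G 0 x = rexp (-‖x‖ ^ 2 / 2) := by simp [hG]
  have hshift (z : PhaseSpace V) : timeFreqShift z (G 0) = G (z.fst, z.snd) := by
    ext y
    rw [timeFreqShift_apply, hwindow, hG, planeWave, mul_comm I]
  have hconj (z : PhaseSpace V) : conjSchwartz (G (z.fst, z.snd)) = Gbar (z.fst, z.snd) := by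
    ext y
    rw [← hshift, conjSchwartz_timeFreqShift_apply, conjSchwartz_apply, hwindow, hGbar,
      Complex.conj_ofReal]
  have hle := hcomp (G 0) _ (fun z => WithLp.toLp 2 (χ₂ z.ofLp))
    (lipschitzWith_toLp_comp_ofLp hχ₁) (measurePreserving_toLp_comp_ofLp hχ₁μ) T₁ T₂ A₁ A₂ hA₁ hA₂
  simp only [stft, hshift, hconj, hwindow, japaneseBracket_phaseSpace_rpow_neg] at hle
  rw [mul_assoc N⁻¹, mul_assoc N⁻¹, mul_assoc N⁻¹, le_inv_mul_iff₀ hN]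
  exact hle (fun z w => hT₁ z.ofLp w.ofLp) (fun z w => hT₂ z.ofLp w.ofLp) (WithLp.toLp 2 z)
    (WithLp.toLp 2 w)

end GaussianWavePackets

/-- composition theorem for the classes `FIO(χ)`.  `T₂ : 𝒮 → 𝒮` and
`T₁ : 𝒮 → 𝒮'` are continuous linear maps whose Gaussian wave-packet matrices are
dominated by `A₂·⟨w - χ₂ z⟩^{-m}` and `A₁·⟨w - χ₁ z⟩^{-m}` respectively, with `m > 2d`,
`χ₁` a Lipschitz (constant `L`) measure preserving bijection of `ℝ^{2d}` and `χ₂` any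
map.  Then the wave-packet matrix of `T₁ T₂` is dominated by `C·A₁·A₂·⟨w - χ₁(χ₂ z)⟩^{-m}`
with `C = C(m,d,L)`.  Here `G z = π(z)g`, `Gbar z = conj (π(z)g)` (Gaussian window),
`⟨T₁ u, π(w)g⟩ = T₁ u (Gbar w)`, and for the Schwartz function `T₂ u` the pairing is
`∫ (T₂ u)(y)·(Gbar w)(y) dy`. -/
theorem stmt4 (d : ℕ) (hd : 1 ≤ d) (m : ℝ) (hm : 2 * (d : ℝ) < m) (L : ℝ) (hL : 0 < L) :
    ∃ C > (0 : ℝ), ∀ (G Gbar : P d → SCH d),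
      (∀ (z : P d) (y : E d), G z y =
        Complex.exp (Complex.I * (⟪y, z.2⟫ : ℂ)) * Real.exp (-‖y - z.1‖ ^ 2 / 2)) →
      (∀ (z : P d) (y : E d), Gbar z y =
        Complex.exp (-Complex.I * (⟪y, z.2⟫ : ℂ)) * Real.exp (-‖y - z.1‖ ^ 2 / 2)) →
      ∀ (χ₁ : P d → P d), Function.Bijective χ₁ →
        (∀ a b : P d, Real.sqrt (ensq (χ₁ a - χ₁ b)) ≤ L * Real.sqrt (ensq (a - b))) →
        MeasurePreserving χ₁ volume volume →
      ∀ (χ₂ : P d → P d),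
      ∀ (T₁ : SCH d →L[ℂ] (SCH d →L[ℂ] ℂ)) (T₂ : SCH d →L[ℂ] SCH d) (A₁ A₂ : ℝ),
        0 ≤ A₁ → 0 ≤ A₂ →
      (∀ z w : P d, ‖T₁ (G z) (Gbar w)‖ ≤ A₁ * (1 + ensq (w - χ₁ z)) ^ (-(m / 2))) →
      (∀ z w : P d, ‖∫ y, T₂ (G z) y * Gbar w y‖ ≤
          A₂ * (1 + ensq (w - χ₂ z)) ^ (-(m / 2))) →
      ∀ z w : P d, ‖T₁ (T₂ (G z)) (Gbar w)‖ ≤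
          C * A₁ * A₂ * (1 + ensq (w - χ₁ (χ₂ z))) ^ (-(m / 2)) := by
  obtain ⟨C, hC, h⟩ := stmt4_general (V := E d) (by simpa using hm) ⟨L, hL.le⟩
  exact ⟨C, hC, fun G Gbar hG hGbar χ₁ _ hχ₁ hχ₁μ χ₂ T₁ T₂ =>
    h G Gbar hG hGbar χ₁ hχ₁ hχ₁μ χ₂
      (ContinuousLinearMap.toPointwiseConvergenceCLM ℂ (RingHom.id ℂ) (SCH d) ℂ ∘L T₁) T₂⟩
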